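/- arXiv:2405.18121 — 3 statements merged into one kernel-verified Lean document; each statement's English description precedes it below -/
import Mathlib

section
/- Let L/K be a finite Galois field extension of degree n with Galois group G = {σ₁, ..., σₙ}, let H₀ = ker(Tr_{L/K}), let b₂, ..., bₙ be a K-basis of H₀, and let E₁ be the (n−1) × (n−1) matrix with (i,j) entry σⱼ(bᵢ) for 2 ≤ i, j ≤ n. If K has characteristic 2, or if the Sylow 2-subgroup of G is not cyclic, then det E₁ ∈ K. -/
/-!
Complete the rows `(σⱼ(bᵢ))ⱼ` by the missing column. Since `Tr bᵢ = 0`, every row of the resulting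
`n × (n + 1)` matrix sums to zero, so permuting its columns by `π` multiplies the minor that omits
the first column by `sign π`. Applying `τ ∈ G` permutes the columns as left multiplication by `τ`
permutes `G`, hence `τ (det E₁) = sign (mulLeft τ) * det E₁`. In characteristic two signs are
trivial. Otherwise, `sign (mulLeft τ)` is a `[G : ⟨τ⟩]`-th power, and this index is even, since a
cyclic subgroup of odd index would contain a (cyclic) Sylow 2-subgroup of `G`.
-/

section ZeroRowSums

variable {R : Type*} [CommRing R] {n : ℕ}

theorem det_vecCons_of_row_sum_eq_zero (x : Fin (n + 1) → R) (B : Matrix (Fin n) (Fin (n + 1)) R)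
    (hB : ∀ i, ∑ j, B i j = 0) :
    (Matrix.of (Matrix.vecCons x B)).det = (∑ j, x j) * (B.submatrix id Fin.succ).det := by
  have row_sum_eq_zero : ∀ i ≠ 0, ∑ j, Matrix.of (Matrix.vecCons x B) i j = 0 :=
    Fin.cases (fun h ↦ absurd rfl h) fun i _ ↦ hB i
  rw [Matrix.det_eq_sum_row_mul_submatrix_succAbove_succAbove_det _ 0 0 row_sum_eq_zero]
  simp only [Fin.val_zero, add_zero, pow_zero, one_mul, Fin.succAbove_zero]
  rfl

theorem det_submatrix_perm_comp_succ_of_row_sum_eq_zero (B : Matrix (Fin n) (Fin (n + 1)) R)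
    (hB : ∀ i, ∑ j, B i j = 0) (π : Equiv.Perm (Fin (n + 1))) :
    (B.submatrix id (π ∘ Fin.succ)).det = Equiv.Perm.sign π * (B.submatrix id Fin.succ).det := by
  let x : Fin (n + 1) → R := Pi.single 0 1
  have sum_x : ∑ j, x j = 1 := by simp [x]
  have sum_x_perm : ∑ j, x (π j) = 1 := (Equiv.sum_comp π x).trans sum_x
  have row_sum_perm (i : Fin n) : ∑ j, B.submatrix id π i j = 0 :=
    (Equiv.sum_comp π (B i)).trans (hB i)
  have bordered_perm : Matrix.of (Matrix.vecCons (x ∘ π) (B.submatrix id π)) =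
      (Matrix.of (Matrix.vecCons x B)).submatrix id π := by
    ext i j
    cases i using Fin.cases <;> rfl
  calc (B.submatrix id (π ∘ Fin.succ)).det
      = (Matrix.of (Matrix.vecCons (x ∘ π) (B.submatrix id π))).det := by
        rw [det_vecCons_of_row_sum_eq_zero _ _ row_sum_perm]
        simp only [Function.comp_apply, sum_x_perm, one_mul, Matrix.submatrix_submatrix,
          Function.comp_id]
    _ = Equiv.Perm.sign π * (Matrix.of (Matrix.vecCons x B)).det := by
        rw [bordered_perm, Matrix.det_permute']
    _ = Equiv.Perm.sign π * (B.submatrix id Fin.succ).det := by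
        rw [det_vecCons_of_row_sum_eq_zero _ _ hB, sum_x, one_mul]

theorem smul_det_smul_succ_of_sum_smul_eq_zero {G : Type*} [Group G] [Fintype G] [DecidableEq G]
    [MulSemiringAction G R] (σ : Fin (n + 1) ≃ G) {b : Fin n → R}
    (hb : ∀ i, ∑ g : G, g • b i = 0) (τ : G) :
    τ • (Matrix.of fun i j : Fin n ↦ σ j.succ • b i).det =
      Equiv.Perm.sign (Equiv.mulLeft τ) * (Matrix.of fun i j : Fin n ↦ σ j.succ • b i).det := by
  let B : Matrix (Fin n) (Fin (n + 1)) R := Matrix.of fun i j ↦ σ j • b i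
  let π : Equiv.Perm (Fin (n + 1)) := σ.symm.permCongr (Equiv.mulLeft τ)
  have row_sum_eq_zero (i : Fin n) : ∑ j, B i j = 0 :=
    (Equiv.sum_comp σ fun g ↦ g • b i).trans (hb i)
  have smul_minor : (B.submatrix id Fin.succ).map (MulSemiringAction.toRingHom G R τ) =
      B.submatrix id (π ∘ Fin.succ) := by
    ext i j
    simp [B, π, mul_smul]
  calc τ • (B.submatrix id Fin.succ).det
      = (B.submatrix id (π ∘ Fin.succ)).det := by
        rw [← smul_minor]
        exact RingHom.map_det (MulSemiringAction.toRingHom G R τ) _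
    _ = Equiv.Perm.sign (Equiv.mulLeft τ) * (B.submatrix id Fin.succ).det := by
        rw [det_submatrix_perm_comp_succ_of_row_sum_eq_zero B row_sum_eq_zero,
          Equiv.Perm.sign_permCongr]

end ZeroRowSums

section SignMulLeft

variable {G : Type*} [Group G]

theorem exists_sylow_le_of_not_dvd_index [Finite G] {p : ℕ} [Fact p.Prime] {H : Subgroup G}
    (hp : ¬ p ∣ H.index) : ∃ P : Sylow p G, P ≤ H := by
  obtain ⟨Q⟩ : Nonempty (Sylow p H) := inferInstance
  have not_dvd_index_map : ¬ p ∣ (Q.map H.subtype).index := by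
    rw [Subgroup.index_map_subtype]
    exact (Fact.out : p.Prime).not_dvd_mul Q.not_dvd_index hp
  exact ⟨(Q.isPGroup'.map H.subtype).toSylow not_dvd_index_map, Subgroup.map_subtype_le _⟩

theorem dvd_index_of_isCyclic_of_forall_sylow_not_isCyclic [Finite G] {p : ℕ} [Fact p.Prime]
    (hG : ∀ P : Sylow p G, ¬ IsCyclic P) (H : Subgroup G) [IsCyclic H] : p ∣ H.index := by
  by_contra hp
  obtain ⟨P, hPH⟩ := exists_sylow_le_of_not_dvd_index hp
  exact hG P (Subgroup.isCyclic_of_le hPH)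

variable [Fintype G] [DecidableEq G]

theorem sign_mulLeft_coe (H : Subgroup G) [Fintype H] (h : H) :
    Equiv.Perm.sign (Equiv.mulLeft (h : G)) = Equiv.Perm.sign (Equiv.mulLeft h) ^ H.index := by
  classical
  obtain ⟨T, hT, -⟩ := H.exists_isComplement_right 1
  have sign_eq_sign_prod := Equiv.Perm.sign_eq_sign_of_equiv (Equiv.mulLeft (h : G))
    (Equiv.prodCongrLeft fun _ : T ↦ Equiv.mulLeft h) hT.equiv (hT.equiv_mul_left h)
  rw [sign_eq_sign_prod, Equiv.Perm.sign_prodCongrLeft, Finset.prod_const, Finset.card_univ,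
    ← Nat.card_eq_fintype_card, hT.card_right]

theorem sign_mulLeft_eq_one_of_forall_sylow_not_isCyclic (hG : ∀ P : Sylow 2 G, ¬ IsCyclic P)
    (τ : G) : Equiv.Perm.sign (Equiv.mulLeft τ) = 1 := by
  classical
  have even_index : Even (Subgroup.zpowers τ).index :=
    even_iff_two_dvd.mpr (dvd_index_of_isCyclic_of_forall_sylow_not_isCyclic hG _)
  rw [sign_mulLeft_coe (Subgroup.zpowers τ) ⟨τ, Subgroup.mem_zpowers τ⟩]
  obtain ⟨k, hk⟩ := even_iff_exists_two_mul.mp even_index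
  rw [hk, pow_mul, Int.units_sq, one_pow]

end SignMulLeft

theorem intCast_units_eq_one_of_charTwo (R : Type*) [Ring R] [CharP R 2] (u : ℤˣ) :
    ((u : ℤ) : R) = 1 := by
  rcases Int.units_eq_one_or u with rfl | rfl <;> simp [CharTwo.neg_eq]

theorem stmt13_general (A : Type*) {B G : Type*} [CommRing A] [CommRing B] [Algebra A B] [Group G]
    [Fintype G] [MulSemiringAction G B] [Algebra.IsInvariant A B G] {n : ℕ}
    (σ : Fin (n + 1) ≃ G) {b : Fin n → B} (hb : ∀ i, ∑ g : G, g • b i = 0)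
    (h : CharP B 2 ∨ ∀ P : Sylow 2 G, ¬ IsCyclic P) :
    (Matrix.of fun i j : Fin n ↦ σ j.succ • b i).det ∈ (algebraMap A B).range := by
  classical
  refine Algebra.IsInvariant.isInvariant (G := G) _ fun τ ↦ ?_
  have sign_eq_one : ((Equiv.Perm.sign (Equiv.mulLeft τ) : ℤ) : B) = 1 := by
    rcases h with charTwo | not_cyclic
    · exact intCast_units_eq_one_of_charTwo B _
    · simp [sign_mulLeft_eq_one_of_forall_sylow_not_isCyclic not_cyclic τ]
  rw [smul_det_smul_succ_of_sum_smul_eq_zero σ hb, sign_eq_one, one_mul]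

theorem sum_algEquiv_smul_eq_zero_of_mem_ker_trace {K L : Type*} [Field K] [Field L] [Algebra K L]
    [FiniteDimensional K L] [IsGalois K L] {x : L} (hx : x ∈ LinearMap.ker (Algebra.trace K L)) :
    ∑ g : L ≃ₐ[K] L, g • x = 0 := by
  simp only [AlgEquiv.smul_def]
  rw [← trace_eq_sum_automorphisms, LinearMap.mem_ker.mp hx, map_zero]

/-- With b₂, ..., bₙ a K-basis of H₀ = ker Tr and E₁ the (n-1) × (n-1) matrix
with (i,j) entry σⱼ(bᵢ): if K has characteristic 2, or the Sylow 2-subgroup of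
G = Gal(L/K) is not cyclic, then det E₁ lies in (the image of) K.
(Here the degree is n + 1 and the bᵢ are indexed by Fin n.) -/
theorem stmt13 (K L : Type*) [Field K] [Field L] [Algebra K L]
    [FiniteDimensional K L] [IsGalois K L]
    (n : ℕ) (hn : Module.finrank K L = n + 1)
    (σ : Fin (n + 1) ≃ (L ≃ₐ[K] L)) (b : Fin n → L)
    (hb_ind : LinearIndependent K b)
    (hb_span : Submodule.span K (Set.range b) = LinearMap.ker (Algebra.trace K L))
    (h : ringChar K = 2 ∨ ∀ P : Sylow 2 (L ≃ₐ[K] L), ¬ IsCyclic P) :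
    (Matrix.of fun i j : Fin n => σ j.succ (b i)).det ∈ (algebraMap K L).range := by
  have mem_ker_trace (i : Fin n) : b i ∈ LinearMap.ker (Algebra.trace K L) :=
    hb_span ▸ Submodule.subset_span (Set.mem_range_self i)
  exact stmt13_general K σ (fun i ↦ sum_algEquiv_smul_eq_zero_of_mem_ker_trace (mem_ker_trace i))
    (h.imp_left fun hK ↦ (Algebra.charP_iff K L 2).mp (ringChar.of_eq hK))
end

section
/- Let L/K be a finite Galois field extension of degree n with Galois group G = {σ₁, ..., σₙ}, let H₀ = ker(Tr_{L/K}) with K-basis b₂, ..., bₙ, let a ∈ L be nonzero, set cᵢ = a^{-1} bᵢ for 2 ≤ i ≤ n (so c₂, ..., cₙ is a basis of the hyperplane H = {x ∈ L : Tr_{L/K}(ax) = 0}), and for x ∈ L let D(x) be the n × n matrix whose first row is (σ₁(x), ..., σₙ(x)) and whose i-th row (2 ≤ i ≤ n) is (σ₁(cᵢ), ..., σₙ(cᵢ)). Let E₁ be the (n−1) × (n−1) matrix with (i,j) entry σⱼ(bᵢ) for 2 ≤ i, j ≤ n. Then det D(x) = N_{L/K}(a^{-1}) · (det E₁) · Tr_{L/K}(ax)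 for all x ∈ L. -/
/-!
Scaling column `j` of `D(x)` by `σⱼ(a)` turns its rows into the conjugates of `a x, b₂, …, bₙ`, at
the cost of the factor `N(a)`. Adding all other columns to the first one then replaces the first
column by the traces `(Tr(a x), 0, …, 0)`, and expanding along it leaves `Tr(a x) · det E₁`.
-/

/-- The matrix `(σⱼ(vᵢ))` of conjugates of a family `v` under a family of maps `σ`: rows are indexed
by the elements, columns by the maps. Both `D(x)` and `E₁` are of this form. The `σⱼ` may belong to
any type of bundled maps, and the two index types may differ. -/
def conjugateMatrix {ι κ F R S : Type*} [FunLike F R S] (σ : κ → F) (v : ι → R) :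
    Matrix ι κ S :=
  Matrix.of fun i j => σ j (v i)

theorem det_conjugateMatrix_mul_left {ι F R S : Type*} [Fintype ι] [DecidableEq ι] [Mul R]
    [CommRing S] [FunLike F R S] [MulHomClass F R S] (σ : ι → F) (a : R) (v : ι → R) :
    (conjugateMatrix σ fun i => a * v i).det = (∏ j, σ j a) * (conjugateMatrix σ v).det := by
  rw [← Matrix.det_mul_row]
  congr 1
  ext i j
  exact map_mul (σ j) a (v i)

theorem det_eq_sum_row_mul_det_submatrix {R : Type*} [CommRing R] {n : ℕ}
    (M : Matrix (Fin (n + 1)) (Fin (n + 1)) R) (p q : Fin (n + 1))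
    (hM : ∀ i ≠ p, ∑ j, M i j = 0) :
    M.det = (-1) ^ (p + q : ℕ) * (∑ j, M p j) * (M.submatrix p.succAbove q.succAbove).det := by
  have det_sum_col : (M.updateCol q fun i => ∑ j, M i j).det = M.det := by
    simpa only [one_smul] using M.det_updateCol_sum q fun _ => 1
  rw [← det_sum_col, Matrix.det_succ_column _ q, Finset.sum_eq_single p]
  · rw [Matrix.updateCol_self, Matrix.submatrix_updateCol_succAbove]
  · intro i _ hi
    rw [Matrix.updateCol_self, hM i hi, mul_zero, zero_mul]
  · exact fun hp => absurd (Finset.mem_univ p) hp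

section Galois

variable {K L ι : Type*} [Field K] [Field L] [Algebra K L] [FiniteDimensional K L] [IsGalois K L]
  [Fintype ι]

theorem sum_apply_eq_algebraMap_trace (σ : ι ≃ (L ≃ₐ[K] L)) (y : L) :
    ∑ j, σ j y = algebraMap K L (Algebra.trace K L y) := by
  rw [trace_eq_sum_automorphisms, ← σ.sum_comp]

theorem prod_apply_eq_algebraMap_norm (σ : ι ≃ (L ≃ₐ[K] L)) (y : L) :
    ∏ j, σ j y = algebraMap K L (Algebra.norm K y) := by
  rw [Algebra.norm_eq_prod_automorphisms, ← σ.prod_comp]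

theorem det_conjugateMatrix_cons_of_trace_eq_zero {n : ℕ} (σ : Fin (n + 1) ≃ (L ≃ₐ[K] L))
    {b : Fin n → L} (hb : ∀ i, Algebra.trace K L (b i) = 0) (y : L) :
    (conjugateMatrix σ (Fin.cons y b : Fin (n + 1) → L)).det =
      algebraMap K L (Algebra.trace K L y) *
        (conjugateMatrix (fun j : Fin n => σ j.succ) b).det := by
  have sum_row (i : Fin (n + 1)) :
      ∑ j, conjugateMatrix σ (Fin.cons y b : Fin (n + 1) → L) i j =
        algebraMap K L (Algebra.trace K L ((Fin.cons y b : Fin (n + 1) → L) i)) :=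
    sum_apply_eq_algebraMap_trace σ _
  have sum_row_succ : ∀ i ≠ 0,
      ∑ j, conjugateMatrix σ (Fin.cons y b : Fin (n + 1) → L) i j = 0 := by
    intro i hi
    obtain ⟨k, rfl⟩ := Fin.exists_succ_eq.mpr hi
    rw [sum_row, Fin.cons_succ, hb, map_zero]
  rw [det_eq_sum_row_mul_det_submatrix _ 0 0 sum_row_succ, sum_row, Fin.cons_zero,
    Fin.val_zero, add_zero, pow_zero, one_mul]
  rfl

theorem stmt16_general {n : ℕ} (σ : Fin (n + 1) ≃ (L ≃ₐ[K] L)) {b : Fin n → L}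
    (hb : ∀ i, Algebra.trace K L (b i) = 0) {a : L} (ha : a ≠ 0) (x : L) :
    (conjugateMatrix σ (Fin.cons x fun i => a⁻¹ * b i : Fin (n + 1) → L)).det =
      algebraMap K L (Algebra.norm K a⁻¹) *
        (conjugateMatrix (fun j : Fin n => σ j.succ) b).det *
        algebraMap K L (Algebra.trace K L (a * x)) := by
  have cons_eq_inv_mul : (Fin.cons x fun i => a⁻¹ * b i : Fin (n + 1) → L) =
      fun i => a⁻¹ * (Fin.cons (a * x) b : Fin (n + 1) → L) i := by
    ext i
    cases i using Fin.cases with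
    | zero => exact (inv_mul_cancel_left₀ ha x).symm
    | succ i => rfl
  rw [cons_eq_inv_mul, det_conjugateMatrix_mul_left, prod_apply_eq_algebraMap_norm,
    det_conjugateMatrix_cons_of_trace_eq_zero σ hb, mul_assoc, mul_comm (Matrix.det _)]

end Galois

/-- With b₂, ..., bₙ a K-basis of H₀ = ker Tr, a ∈ L nonzero, cᵢ = a⁻¹ bᵢ, and
D(x) the n × n matrix with first row (σⱼ(x))ⱼ and later rows (σⱼ(cᵢ))ⱼ, and E₁
the (n-1) × (n-1) matrix with entries σⱼ(bᵢ), we have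
det D(x) = N_{L/K}(a⁻¹) · det E₁ · Tr_{L/K}(a x) for all x ∈ L.
(Here the degree is n + 1 and the bᵢ are indexed by Fin n.) -/
theorem stmt16 (K L : Type*) [Field K] [Field L] [Algebra K L]
    [FiniteDimensional K L] [IsGalois K L]
    (n : ℕ) (hn : Module.finrank K L = n + 1)
    (σ : Fin (n + 1) ≃ (L ≃ₐ[K] L)) (b : Fin n → L)
    (hb_ind : LinearIndependent K b)
    (hb_span : Submodule.span K (Set.range b) = LinearMap.ker (Algebra.trace K L))
    (a : L) (ha : a ≠ 0) (c : Fin n → L) (hc : ∀ i, c i = a⁻¹ * b i) (x : L) :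
    (Matrix.of fun i j : Fin (n + 1) =>
        Fin.cases (motive := fun _ => L) (σ j x) (fun i' => σ j (c i')) i).det =
      algebraMap K L (Algebra.norm K a⁻¹) *
        (Matrix.of fun i j : Fin n => σ j.succ (b i)).det *
        algebraMap K L (Algebra.trace K L (a * x)) := by
  have trace_b (i : Fin n) : Algebra.trace K L (b i) = 0 :=
    hb_span.le (Submodule.subset_span ⟨i, rfl⟩)
  refine (congrArg Matrix.det ?_).trans (stmt16_general σ trace_b ha x)
  ext i j
  cases i using Fin.cases with
  | zero => rfl
  | succ i => exact congrArg (σ j) (hc i)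
end

section
/- Let L/K be a cyclic Galois field extension of degree n with Gal(L/K) = ⟨σ⟩, let k be an integer with 1 ≤ k ≤ n, and let b₁, ..., b_k ∈ L be linearly independent over K with b₁ ≠ 0. Set x_j = b_j − (b₁/σ(b₁))·σ(b_j) for 2 ≤ j ≤ k. Then x₂, ..., x_k are linearly independent over K. -/
/-!
For `b ≠ 0`, the `K`-linear map `x ↦ x - (b / σ b) * σ x` kills exactly those `x` for which
`b⁻¹ * x` is fixed by `σ`. When `σ` fixes only `K`, its kernel is therefore the line `K ∙ b`.
A linear map whose kernel is spanned by some members of a linearly independent family keeps the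
remaining members linearly independent; take the family `b₁, …, b_k` and the kernel `K ∙ b₁`.
-/

open Submodule

theorem linearIndependent_compl_of_ker_le_span_image {ι R M N : Type*} [Ring R]
    [AddCommGroup M] [Module R M] [AddCommGroup N] [Module R N] {b : ι → M}
    (hb : LinearIndependent R b) {s : Set ι} {f : M →ₗ[R] N}
    (hf : LinearMap.ker f ≤ span R (b '' s)) :
    LinearIndependent R fun j : ↥sᶜ => f (b j) := by
  have hcompl : LinearIndependent R fun j : ↥sᶜ => b j := hb.comp _ Subtype.val_injective
  refine hcompl.map (f := f) ?_
  rw [← Set.image_eq_range]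
  exact (hb.disjoint_span_image disjoint_compl_left).mono_right hf

theorem mem_range_algebraMap_of_generator_fixed {K L : Type*} [Field K] [Field L] [Algebra K L]
    [IsGalois K L] {σ : L ≃ₐ[K] L} (hσ : ∀ τ : L ≃ₐ[K] L, τ ∈ Subgroup.zpowers σ) {x : L}
    (hx : σ x = x) : x ∈ Set.range (algebraMap K L) := by
  have hstab : Subgroup.zpowers σ ≤ MulAction.stabilizer (L ≃ₐ[K] L) x :=
    Subgroup.zpowers_le.2 hx
  exact (InfiniteGalois.mem_range_algebraMap_iff_fixed x).2 fun τ => hstab (hσ τ)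

section TwistedDifference

variable {K L : Type*} [CommRing K] [DivisionRing L] [Algebra K L] {σ : L →ₐ[K] L} {b : L}

/-- The `K`-linear map `x ↦ x - (b / σ b) * σ x`, whose values at `b₂, …, b_k` are the elements
`x_j` when `b = b₁`. For `b ≠ 0` it is the difference operator `id - σ` conjugated by left
multiplication by `b`; for `b = 0` it is the identity, as `0 / 0 = 0`. -/
def twistedDifference (σ : L →ₐ[K] L) (b : L) : L →ₗ[K] L :=
  LinearMap.id - LinearMap.mulLeft K (b / σ b) ∘ₗ σ.toLinearMap

theorem twistedDifference_apply (x : L) :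
    twistedDifference σ b x = x - b / σ b * σ x :=
  rfl

theorem twistedDifference_eq_zero_iff (hb : b ≠ 0) {x : L} :
    twistedDifference σ b x = 0 ↔ σ (b⁻¹ * x) = b⁻¹ * x := by
  rw [twistedDifference_apply, sub_eq_zero, div_eq_mul_inv, mul_assoc, map_mul, map_inv₀,
    eq_inv_mul_iff_mul_eq₀ hb, eq_comm]

theorem ker_twistedDifference_le (hσ : ∀ x, σ x = x → x ∈ Set.range (algebraMap K L))
    (hb : b ≠ 0) : LinearMap.ker (twistedDifference σ b) ≤ K ∙ b := by
  intro x hx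
  obtain ⟨a, ha⟩ := hσ _ ((twistedDifference_eq_zero_iff hb).1 hx)
  refine mem_span_singleton.2 ⟨a, ?_⟩
  rw [Algebra.smul_def, Algebra.commutes, ha, mul_inv_cancel_left₀ hb]

end TwistedDifference

theorem stmt18_general {ι K L : Type*} [CommRing K] [DivisionRing L] [Algebra K L]
    {σ : L →ₐ[K] L} (hσ : ∀ x, σ x = x → x ∈ Set.range (algebraMap K L))
    {b : ι → L} (hb : LinearIndependent K b) (i : ι) :
    LinearIndependent K fun j : {j // j ≠ i} => b j - b i / σ (b i) * σ (b j) := by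
  have : Nontrivial K := (algebraMap K L).domain_nontrivial
  refine linearIndependent_compl_of_ker_le_span_image (s := {i})
    (f := twistedDifference σ (b i)) hb ?_
  rw [Set.image_singleton]
  exact ker_twistedDifference_le hσ (hb.ne_zero i)

/-- Let L/K be a cyclic Galois extension of degree n with Gal(L/K) = ⟨σ⟩, let
1 ≤ k ≤ n and b₁, ..., b_k ∈ L be linearly independent over K (so b₁ ≠ 0).
Setting x_j = b_j − (b₁/σ(b₁))·σ(b_j) for 2 ≤ j ≤ k, the elements x₂, ..., x_k
are linearly independent over K. (Here k = m + 1, the bᵢ are indexed by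
Fin (m+1) and the xⱼ by Fin m.) -/
theorem stmt18 (K L : Type*) [Field K] [Field L] [Algebra K L]
    [FiniteDimensional K L] [IsGalois K L]
    (n : ℕ) (hn : Module.finrank K L = n)
    (σ : L ≃ₐ[K] L) (hσ : ∀ τ : L ≃ₐ[K] L, τ ∈ Subgroup.zpowers σ)
    (m : ℕ) (hm : m + 1 ≤ n) (b : Fin (m + 1) → L)
    (hb : LinearIndependent K b) (hb0 : b 0 ≠ 0) :
    LinearIndependent K
      (fun j : Fin m => b j.succ - (b 0 / σ (b 0)) * σ (b j.succ)) := by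
  have hfixed : ∀ x, σ.toAlgHom x = x → x ∈ Set.range (algebraMap K L) :=
    fun _ => mem_range_algebraMap_of_generator_fixed hσ
  exact (stmt18_general hfixed hb 0).comp (fun j => ⟨j.succ, j.succ_ne_zero⟩)
    fun _ _ h => Fin.succ_injective m (congrArg Subtype.val h)
end
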